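/- arXiv:2402.11225 — 2 statements merged into one kernel-verified Lean document; each statement's English description precedes it below -/
import Mathlib

section
/- Let f : ℝ² → ℝ be of class C² satisfying (i) D²f(p)(q,q) > 0 for all p, q ∈ ℝ² with q ≠ 0, and (ii) there is a constant Λ > 0 with |D²f(p)| ≤ Λ/(1+|p|) for all p ∈ ℝ². Let u ∈ C²(ℝ²) solve div[Df(∇u)] = 0 on ℝ², and suppose there is K > 0 with |∂₁u(x)| · ln²(1+|∂₁u(x)|) ≤ K(|∂₂u(x)| + 1) for all x ∈ ℝ². Then ∫_{ℝ²} D²f(∇u)(∇∂₁u, ∇∂₁u) · (1+|∂₁u|²)^{−1/2} dx < ∞. -/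
open Real MeasureTheory Metric
open scoped ENNReal

noncomputable section

/-- `ℝ²` with its Euclidean structure. -/
abbrev E2 : Type := EuclideanSpace ℝ (Fin 2)

/-- The `i`-th standard basis vector of `ℝ²`. -/
def ee (i : Fin 2) : E2 := EuclideanSpace.single i 1

/-- The Hessian bilinear form `D²f(p)(q,q)`. -/
def Hess (f : E2 → ℝ) (p q : E2) : ℝ := iteratedFDeriv ℝ 2 f p ![q, q]

/-- The partial derivative `∂ᵢu(x)`. -/
def pd (u : E2 → ℝ) (i : Fin 2) (x : E2) : ℝ := fderiv ℝ u x (ee i)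

/-- The equation `div [Df(∇u)] = 0`, i.e. `∑ i, ∂ᵢ[(∂f/∂pᵢ)(∇u(x))] = 0` on `ℝ²`. -/
def solves (f u : E2 → ℝ) : Prop :=
  ∀ x : E2, ∑ i : Fin 2, fderiv ℝ (fun y => fderiv ℝ f (gradient u y) (ee i)) x (ee i) = 0

section Calculus

variable {E : Type*} [NormedAddCommGroup E] [NormedSpace ℝ E] [MeasurableSpace E] [BorelSpace E]
  (μ : Measure E)

/-- Differentiation of a translation under the integral sign, against a compactly supported
continuous weight. -/
theorem hasDerivAt_integral_translate_mul [IsFiniteMeasureOnCompacts μ] {F k : E → ℝ} (hF : ContDiff ℝ 1 F)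
    (hk : Continuous k) (hkc : HasCompactSupport k) (e : E) :
    HasDerivAt (fun h : ℝ => ∫ x, F (x + h • e) * k x ∂μ) (∫ x, fderiv ℝ F x e * k x ∂μ) 0 := by
  have hF' : Continuous (fun y => fderiv ℝ F y e) :=
    (hF.continuous_fderiv one_ne_zero).clm_apply continuous_const
  obtain ⟨M, hM⟩ :=
    ((isCompact_Icc (a := (-1 : ℝ)) (b := 1)).prod hkc.isCompact).exists_bound_of_continuousOn
    (f := fun z : ℝ × E => fderiv ℝ F (z.2 + z.1 • e) e)
    (hF'.comp (by fun_prop)).continuousOn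
  have key := hasDerivAt_integral_of_dominated_loc_of_deriv_le (μ := μ) (x₀ := (0 : ℝ))
    (F := fun (h : ℝ) x => F (x + h • e) * k x)
    (F' := fun (h : ℝ) x => fderiv ℝ F (x + h • e) e * k x)
    (bound := fun x => M * ‖k x‖) (s := Set.Icc (-1) 1)
    (Icc_mem_nhds (by norm_num) (by norm_num)) ?_ ?_ ?_ ?_ ?_ ?_
  · simpa using key.2
  · refine Filter.Eventually.of_forall fun h => Continuous.aestronglyMeasurable ?_
    have := hF.continuous
    fun_prop
  · have := hF.continuous
    exact Continuous.integrable_of_hasCompactSupport (by fun_prop) hkc.mul_left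
  · exact ((hF'.comp (by fun_prop : Continuous fun x : E => x + (0 : ℝ) • e)).mul
      hk).aestronglyMeasurable
  · refine Filter.Eventually.of_forall fun x h hh => ?_
    by_cases hx : x ∈ tsupport k
    · rw [norm_mul]
      exact mul_le_mul_of_nonneg_right (hM (h, x) ⟨hh, hx⟩) (norm_nonneg _)
    · simp [image_eq_zero_of_notMem_tsupport hx]
  · exact (hk.integrable_of_hasCompactSupport hkc).norm.const_mul M
  · refine Filter.Eventually.of_forall fun x h _ => HasDerivAt.mul_const ?_ _
    have h1 : HasDerivAt (fun t : ℝ => x + t • e) e h := by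
      simpa using ((hasDerivAt_id h).smul_const e).const_add x
    exact ((hF.differentiable one_ne_zero) (x + h • e)).hasFDerivAt.comp_hasDerivAt h h1

/-- Directional derivatives of a `C¹` divergence-free field are weakly divergence-free: they
annihilate gradients of compactly supported `C¹` functions. -/
theorem integral_sum_fderiv_mul_fderiv_eq_zero [FiniteDimensional ℝ E] [μ.IsAddHaarMeasure]
    {ι : Type*} [Fintype ι] {F : ι → E → ℝ} {b : ι → E}
    (hF : ∀ i, ContDiff ℝ 1 (F i)) (hdiv : ∀ x, ∑ i, fderiv ℝ (F i) x (b i) = 0)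
    {φ : E → ℝ} (hφ : ContDiff ℝ 1 φ) (hφc : HasCompactSupport φ) (e : E) :
    ∫ x, ∑ i, fderiv ℝ (F i) x e * fderiv ℝ φ x (b i) ∂μ = 0 := by
  have hcont : ∀ {G : E → ℝ}, ContDiff ℝ 1 G → ∀ v, Continuous (fun y => fderiv ℝ G y v) :=
    fun hG v => (hG.continuous_fderiv one_ne_zero).clm_apply continuous_const
  have hsupp : ∀ v, HasCompactSupport (fun y => fderiv ℝ φ y v) := fun v =>
    hφc.fderiv_apply ℝ v
  have hzero : ∀ h : ℝ, ∑ i, ∫ x, F i (x + h • e) * fderiv ℝ φ x (b i) ∂μ = 0 := by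
    intro h
    have hG : ∀ i, ContDiff ℝ 1 (fun x => F i (x + h • e)) := fun i =>
      (hF i).comp (contDiff_id.add contDiff_const)
    have hi : ∀ i, Integrable (fun x => fderiv ℝ (fun x => F i (x + h • e)) x (b i) * φ x) μ :=
      fun i => ((hcont (hG i) (b i)).mul hφ.continuous).integrable_of_hasCompactSupport
        hφc.mul_left
    have hparts : ∀ i, ∫ x, F i (x + h • e) * fderiv ℝ φ x (b i) ∂μ =
        -∫ x, fderiv ℝ (fun x => F i (x + h • e)) x (b i) * φ x ∂μ := fun i =>
      integral_mul_fderiv_eq_neg_fderiv_mul_of_integrable (hi i)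
        (((hG i).continuous.mul (hcont hφ (b i))).integrable_of_hasCompactSupport
          (hsupp (b i)).mul_left)
        (((hG i).continuous.mul hφ.continuous).integrable_of_hasCompactSupport hφc.mul_left)
        (fun x _ => (hG i).differentiable one_ne_zero x)
        (fun x _ => hφ.differentiable one_ne_zero x)
    simp_rw [hparts, Finset.sum_neg_distrib]
    rw [← integral_finsetSum _ fun i _ => hi i]
    simp_rw [← Finset.sum_mul, fderiv_comp_add_right, hdiv]
    simp
  have hder : HasDerivAt (fun h : ℝ => ∑ i, ∫ x, F i (x + h • e) * fderiv ℝ φ x (b i) ∂μ)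
      (∑ i, ∫ x, fderiv ℝ (F i) x e * fderiv ℝ φ x (b i) ∂μ) 0 :=
    HasDerivAt.fun_sum fun i _ =>
      hasDerivAt_integral_translate_mul μ (hF i) (hcont hφ (b i)) (hsupp (b i)) e
  have hint : ∀ i, Integrable (fun x => fderiv ℝ (F i) x e * fderiv ℝ φ x (b i)) μ := fun i =>
    ((hcont (hF i) e).mul (hcont hφ (b i))).integrable_of_hasCompactSupport (hsupp (b i)).mul_left
  rw [integral_finsetSum _ fun i _ => hint i]
  simp_rw [hzero] at hder
  exact hder.unique (hasDerivAt_const _ _)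

end Calculus

section Gradient

variable {H : Type*} [NormedAddCommGroup H] [InnerProductSpace ℝ H] [CompleteSpace H]

theorem ContDiff.gradient_right {u : H → ℝ} {m n : WithTop ℕ∞} (hu : ContDiff ℝ n u)
    (hmn : m + 1 ≤ n) : ContDiff ℝ m (gradient u) :=
  (InnerProductSpace.toDual ℝ H).symm.contDiff.comp (hu.fderiv_right hmn)

/-- The derivative of the gradient in a direction is the gradient of the directional derivative. -/
theorem fderiv_gradient_apply {u : H → ℝ} (hu : ContDiff ℝ 2 u) (x e : H) :
    fderiv ℝ (gradient u) x e = gradient (fun y => fderiv ℝ u y e) x := by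
  have hG : DifferentiableAt ℝ (gradient u) x :=
    (hu.gradient_right (m := 1) (by norm_num)).differentiable one_ne_zero x
  have hD : DifferentiableAt ℝ (fderiv ℝ u) x :=
    (hu.fderiv_right (m := 1) (by norm_num)).differentiable one_ne_zero x
  refine ext_inner_right ℝ fun w => ?_
  have h1 : inner ℝ (fderiv ℝ (gradient u) x e) w =
      fderiv ℝ (fun y => inner ℝ (gradient u y) w) x e := by
    rw [fderiv_inner_apply ℝ hG (differentiableAt_const w)]
    simp
  have happ : ∀ v, fderiv ℝ (fun y => fderiv ℝ u y v) x = (fderiv ℝ (fderiv ℝ u) x).flip v := by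
    intro v
    ext z
    rw [fderiv_clm_apply hD (differentiableAt_const v)]
    simp
  have hsymm : IsSymmSndFDerivAt ℝ u x := hu.contDiffAt.isSymmSndFDerivAt (by simp)
  rw [h1, inner_gradient_left]
  simp_rw [inner_gradient_left, happ]
  exact hsymm e w

end Gradient

theorem sum_apply_ee_mul_fderiv_ee (L : E2 →L[ℝ] ℝ) (φ : E2 → ℝ) (x : E2) :
    ∑ i, L (ee i) * fderiv ℝ φ x (ee i) = L (gradient φ x) := by
  conv_rhs => rw [← (EuclideanSpace.basisFun (Fin 2) ℝ).sum_repr' (gradient φ x)]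
  simp only [map_sum, map_smul, smul_eq_mul, EuclideanSpace.basisFun_apply, ee]
  refine Finset.sum_congr rfl fun i _ => ?_
  rw [real_inner_comm, inner_gradient_left, mul_comm]

theorem arsinh_sq_mul_sqrt_le (t : ℝ) :
    arsinh t ^ 2 * √(1 + t ^ 2) ≤ 8 * (|t| * Real.log (1 + |t|) ^ 2) + 4 := by
  have ht := abs_nonneg t
  have hs : √(1 + t ^ 2) ≤ 1 + |t| := by
    rw [Real.sqrt_le_left (by positivity)]
    nlinarith [sq_abs t]
  have hl : 0 ≤ Real.log (1 + |t|) := Real.log_nonneg (by linarith)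
  have ha : |arsinh t| ≤ 2 * Real.log (1 + |t|) := by
    have h1 : arsinh |t| ≤ 2 * Real.log (1 + |t|) := by
      rw [arsinh, sq_abs, ← Real.log_rpow (by positivity)]
      refine Real.log_le_log (by positivity) ?_
      norm_cast
      nlinarith
    rcases abs_cases t with ⟨h, h0⟩ | ⟨h, h0⟩
    · rwa [abs_of_nonneg (arsinh_nonneg_iff.2 h0), ← congrArg arsinh h]
    · rwa [abs_of_neg (arsinh_neg_iff.2 h0), ← arsinh_neg, ← congrArg arsinh h]
  have hsq : arsinh t ^ 2 ≤ 4 * Real.log (1 + |t|) ^ 2 := by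
    rw [← sq_abs]
    nlinarith [abs_nonneg (arsinh t)]
  have hlog : Real.log (1 + |t|) ^ 2 ≤ |t| * Real.log (1 + |t|) ^ 2 + 1 := by
    rcases le_total 1 |t| with h | h
    · nlinarith [sq_nonneg (Real.log (1 + |t|))]
    · have : Real.log (1 + |t|) ≤ |t| := by
        have := Real.log_le_sub_one_of_pos (show 0 < 1 + |t| by positivity)
        linarith
      nlinarith [mul_nonneg ht (sq_nonneg (Real.log (1 + |t|)))]
  calc arsinh t ^ 2 * √(1 + t ^ 2)
      ≤ 4 * Real.log (1 + |t|) ^ 2 * (1 + |t|) := by gcongr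
    _ ≤ _ := by nlinarith

theorem Hess_eq_fderiv_fderiv (f : E2 → ℝ) (p q : E2) :
    Hess f p q = fderiv ℝ (fderiv ℝ f) p q q := by
  simp [Hess, iteratedFDeriv_two_apply]

theorem Hess_le_norm_mul_sq (f : E2 → ℝ) (p q : E2) :
    Hess f p q ≤ ‖iteratedFDeriv ℝ 2 f p‖ * ‖q‖ ^ 2 := by
  refine (le_abs_self _).trans ?_
  simpa [Hess, Fin.prod_univ_two, sq] using (iteratedFDeriv ℝ 2 f p).le_opNorm ![q, q]

theorem contDiff_pd {u : E2 → ℝ} (hu : ContDiff ℝ 2 u) (i : Fin 2) : ContDiff ℝ 1 (pd u i) :=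
  (hu.fderiv_right (m := 1) (by norm_num)).clm_apply contDiff_const

theorem continuous_Hess_comp {f : E2 → ℝ} (hf : ContDiff ℝ 2 f) {P Q : E2 → E2}
    (hP : Continuous P) (hQ : Continuous Q) : Continuous fun x => Hess f (P x) (Q x) := by
  simp_rw [Hess_eq_fderiv_fderiv]
  have h2 : Continuous (fderiv ℝ (fderiv ℝ f)) :=
    (hf.fderiv_right (m := 1) (by norm_num)).continuous_fderiv one_ne_zero
  exact ((h2.comp hP).clm_apply hQ).clm_apply hQ

/-- The linearised equation: the field `D²f(∇u) ∇∂₁u` is weakly divergence-free. -/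
theorem integral_fderiv_fderiv_gradient_pd_eq_zero {f u : E2 → ℝ} (hf : ContDiff ℝ 2 f)
    (hu : ContDiff ℝ 2 u) (heq : solves f u) (i : Fin 2) {φ : E2 → ℝ} (hφ : ContDiff ℝ 1 φ)
    (hφc : HasCompactSupport φ) :
    ∫ x, fderiv ℝ (fderiv ℝ f) (gradient u x) (gradient (pd u i) x) (gradient φ x) = 0 := by
  have hDf : ContDiff ℝ 1 (fderiv ℝ f) := hf.fderiv_right (by norm_num)
  have hG : ContDiff ℝ 1 (gradient u) := hu.gradient_right (by norm_num)
  have hF : ∀ j : Fin 2, ContDiff ℝ 1 (fun y => fderiv ℝ f (gradient u y) (ee j)) := fun j =>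
    (hDf.comp hG).clm_apply contDiff_const
  rw [← integral_sum_fderiv_mul_fderiv_eq_zero volume hF heq hφ hφc (ee i)]
  refine integral_congr_ae (Filter.Eventually.of_forall fun x => ?_)
  simp only
  rw [← sum_apply_ee_mul_fderiv_ee]
  refine Finset.sum_congr rfl fun j _ => ?_
  have hc : HasFDerivAt (fun y => fderiv ℝ f (gradient u y))
      ((fderiv ℝ (fderiv ℝ f) (gradient u x)).comp (fderiv ℝ (gradient u) x)) x :=
    (hDf.differentiable one_ne_zero _).hasFDerivAt.comp x
      (hG.differentiable one_ne_zero x).hasFDerivAt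
  rw [fderiv_clm_apply hc.differentiableAt (differentiableAt_const _), hc.fderiv]
  simp [fderiv_gradient_apply hu, show pd u i = fun y => fderiv ℝ u y (ee i) from rfl]

theorem gradient_sq_mul_arsinh {η v : E2 → ℝ} {x : E2} (hη : DifferentiableAt ℝ η x)
    (hv : DifferentiableAt ℝ v x) :
    gradient (fun y => η y ^ 2 * arsinh (v y)) x =
      (2 * η x * arsinh (v x)) • gradient η x +
        (η x ^ 2 * (√(1 + v x ^ 2))⁻¹) • gradient v x := by
  have h := (hη.hasFDerivAt.pow 2).mul hv.hasFDerivAt.arsinh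
  refine ext_inner_right ℝ fun w => ?_
  rw [inner_add_left, real_inner_smul_left, real_inner_smul_left, inner_gradient_left,
    inner_gradient_left, inner_gradient_left]
  have : fderiv ℝ (fun y => η y ^ 2 * arsinh (v y)) x = _ := h.fderiv
  rw [this]
  simp
  ring

/-- Caccioppoli inequality for `∂ᵢu`, obtained by testing with `η² arsinh (∂ᵢu)`. -/
theorem integral_sq_mul_Hess_le {f u : E2 → ℝ} (hf : ContDiff ℝ 2 f)
    (hnonneg : ∀ p q, 0 ≤ Hess f p q) (hu : ContDiff ℝ 2 u) (heq : solves f u) (i : Fin 2)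
    {η : E2 → ℝ} (hη : ContDiff ℝ 1 η) (hηc : HasCompactSupport η) :
    ∫ x, η x ^ 2 * (Hess f (gradient u x) (gradient (pd u i) x) * (√(1 + pd u i x ^ 2))⁻¹) ≤
      4 * ∫ x, Hess f (gradient u x) (gradient η x) *
        (arsinh (pd u i x) ^ 2 * √(1 + pd u i x ^ 2)) := by
  set v := pd u i
  have hv : ContDiff ℝ 1 v := contDiff_pd hu i
  have hGu : Continuous (gradient u) := (hu.gradient_right (m := 1) (by norm_num)).continuous
  have hGv : Continuous (gradient v) := (hv.gradient_right (m := 0) (by norm_num)).continuous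
  have hGη : Continuous (gradient η) := (hη.gradient_right (m := 0) (by norm_num)).continuous
  have hvc := hv.continuous
  have hηcont := hη.continuous
  have hpos : ∀ x, 0 < √(1 + v x ^ 2) := fun x => Real.sqrt_pos.2 (by positivity)
  have hS : Continuous fun x => √(1 + v x ^ 2) := by fun_prop
  have hψ : Continuous fun x => arsinh (v x) := continuous_arsinh.comp hvc
  have hφ : ContDiff ℝ 1 (fun y => η y ^ 2 * arsinh (v y)) := (hη.pow 2).mul hv.arsinh
  have hη2 : HasCompactSupport fun y => η y ^ 2 := by
    simp_rw [sq]; exact hηc.mul_left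
  have hφc : HasCompactSupport (fun y => η y ^ 2 * arsinh (v y)) := hη2.mul_right
  have hGφ := (hφ.gradient_right (m := 0) (by norm_num)).continuous
  have hgradc : ∀ {g : E2 → ℝ}, HasCompactSupport g → HasCompactSupport (gradient g) := fun hg =>
    (hg.fderiv ℝ).comp_left (g := (InnerProductSpace.toDual ℝ E2).symm) (map_zero _)
  have h2 : Continuous (fderiv ℝ (fderiv ℝ f)) :=
    (hf.fderiv_right (m := 1) (by norm_num)).continuous_fderiv one_ne_zero
  have hzero := integral_fderiv_fderiv_gradient_pd_eq_zero hf hu heq i hφ hφc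
  have i0 : Integrable fun x => fderiv ℝ (fderiv ℝ f) (gradient u x) (gradient v x)
      (gradient (fun y => η y ^ 2 * arsinh (v y)) x) :=
    (((h2.comp hGu).clm_apply hGv).clm_apply hGφ).integrable_of_hasCompactSupport
      ((hgradc hφc).mono' (Function.support_subset_iff'.2 fun x hx => by
        simp [image_eq_zero_of_notMem_tsupport hx]))
  have i1 : Integrable fun x =>
      η x ^ 2 * (Hess f (gradient u x) (gradient v x) * (√(1 + v x ^ 2))⁻¹) :=
    ((hηcont.pow 2).mul ((continuous_Hess_comp hf hGu hGv).mul
      (hS.inv₀ fun x => (hpos x).ne'))).integrable_of_hasCompactSupport hη2.mul_right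
  have i2 : Integrable fun x => Hess f (gradient u x) (gradient η x) *
      (arsinh (v x) ^ 2 * √(1 + v x ^ 2)) :=
    ((continuous_Hess_comp hf hGu hGη).mul ((hψ.pow 2).mul hS)).integrable_of_hasCompactSupport
      ((hgradc hηc).mono' (Function.support_subset_iff'.2 fun x hx => by
        simp [image_eq_zero_of_notMem_tsupport hx, Hess_eq_fderiv_fderiv]))
  have hmono := integral_mono ((i1.const_mul (1 / 2)).sub (i2.const_mul 2)) i0 fun x => by
    have hsymm : IsSymmSndFDerivAt ℝ f (gradient u x) :=
      hf.contDiffAt.isSymmSndFDerivAt (by simp)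
    have hq := hnonneg (gradient u x)
      (η x • gradient v x + (2 * arsinh (v x) * √(1 + v x ^ 2)) • gradient η x)
    simp only [Pi.sub_apply]
    rw [gradient_sq_mul_arsinh (hη.differentiable one_ne_zero x)
      (hv.differentiable one_ne_zero x)]
    simp only [Hess_eq_fderiv_fderiv, map_add, map_smul, add_apply,
      smul_apply, smul_eq_mul] at hq ⊢
    rw [hsymm (gradient η x) (gradient v x)] at hq
    have hs := hpos x
    generalize √(1 + v x ^ 2) = s at *
    have hq' := mul_nonneg (inv_nonneg.2 hs.le) hq
    rw [← sub_nonneg]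
    refine le_of_le_of_eq (mul_nonneg (by norm_num : (0 : ℝ) ≤ 1 / 2) hq') ?_
    field_simp
    ring
  rw [integral_sub' (i1.const_mul _) (i2.const_mul _), integral_const_mul, integral_const_mul,
    hzero] at hmono
  linarith

/-- The Dirichlet integral is scale invariant in the plane. -/
theorem integral_norm_gradient_comp_inv_smul_sq (χ : E2 → ℝ) {R : ℝ} (hR : 0 < R) :
    ∫ x, ‖gradient (fun y => χ (R⁻¹ • y)) x‖ ^ 2 = ∫ x, ‖gradient χ x‖ ^ 2 := by
  have hg : ∀ x, ‖gradient (fun y => χ (R⁻¹ • y)) x‖ ^ 2 =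
      (R ^ 2)⁻¹ * (fun z => ‖gradient χ z‖ ^ 2) (R⁻¹ • x) := by
    intro x
    simp only [gradient, LinearIsometryEquiv.norm_map]
    rw [fderiv_comp_smul, norm_smul, mul_pow]
    simp
  simp_rw [hg]
  rw [integral_const_mul,
    Measure.integral_comp_inv_smul volume (fun z : E2 => ‖gradient χ z‖ ^ 2) R]
  simp
  field_simp

/-- Energy bound with a cut-off: the right-hand side only sees the Dirichlet integral of `η`. -/
theorem integral_sq_mul_Hess_le_dirichlet {f u : E2 → ℝ} (hf : ContDiff ℝ 2 f)
    (hnonneg : ∀ p q, 0 ≤ Hess f p q) {Lam : ℝ} (hLam : 0 ≤ Lam)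
    (hgrow : ∀ p : E2, ‖iteratedFDeriv ℝ 2 f p‖ ≤ Lam / (1 + ‖p‖))
    (hu : ContDiff ℝ 2 u) (heq : solves f u) {K : ℝ} (hK : 0 ≤ K)
    (hbd : ∀ x : E2, |pd u 0 x| * (Real.log (1 + |pd u 0 x|)) ^ 2 ≤ K * (|pd u 1 x| + 1))
    {η : E2 → ℝ} (hη : ContDiff ℝ 1 η) (hηc : HasCompactSupport η) :
    ∫ x, η x ^ 2 * (Hess f (gradient u x) (gradient (pd u 0) x) * (√(1 + pd u 0 x ^ 2))⁻¹) ≤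
      4 * (Lam * (8 * K + 4) * ∫ x, ‖gradient η x‖ ^ 2) := by
  refine (integral_sq_mul_Hess_le hf hnonneg hu heq 0 hη hηc).trans ?_
  have hint : Integrable fun x => ‖gradient η x‖ ^ 2 := by
    have hc : HasCompactSupport (gradient η) :=
      (hηc.fderiv ℝ).comp_left (g := (InnerProductSpace.toDual ℝ E2).symm) (map_zero _)
    have hcont : Continuous (gradient η) :=
      (hη.gradient_right (m := 0) (by norm_num)).continuous
    simp_rw [sq]
    exact (hcont.norm.mul hcont.norm).integrable_of_hasCompactSupport hc.norm.mul_left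
  rw [← integral_const_mul (Lam * (8 * K + 4))]
  refine mul_le_mul_of_nonneg_left ?_ zero_le_four
  refine integral_mono_of_nonneg (Filter.Eventually.of_forall fun x => ?_) (hint.const_mul _)
    (Filter.Eventually.of_forall fun x => ?_)
  · exact mul_nonneg (hnonneg _ _) (by positivity)
  · have h1 : |pd u 1 x| ≤ ‖gradient u x‖ := by
      have := abs_real_inner_le_norm (gradient u x) (ee 1)
      rw [inner_gradient_left] at this
      simpa [ee, pd] using this
    have h2 : arsinh (pd u 0 x) ^ 2 * √(1 + pd u 0 x ^ 2) ≤
        (8 * K + 4) * (1 + ‖gradient u x‖) := by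
      have := mul_le_mul_of_nonneg_left h1 hK
      linarith [arsinh_sq_mul_sqrt_le (pd u 0 x), hbd x, norm_nonneg (gradient u x)]
    have h3 : Hess f (gradient u x) (gradient η x) ≤
        Lam / (1 + ‖gradient u x‖) * ‖gradient η x‖ ^ 2 :=
      (Hess_le_norm_mul_sq f _ _).trans
        (mul_le_mul_of_nonneg_right (hgrow _) (by positivity))
    have hp : 0 < 1 + ‖gradient u x‖ := by positivity
    calc Hess f (gradient u x) (gradient η x) * (arsinh (pd u 0 x) ^ 2 * √(1 + pd u 0 x ^ 2))
        ≤ Lam / (1 + ‖gradient u x‖) * ‖gradient η x‖ ^ 2 *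
          ((8 * K + 4) * (1 + ‖gradient u x‖)) :=
          mul_le_mul h3 h2 (by positivity) (by positivity)
      _ = Lam * (8 * K + 4) * ‖gradient η x‖ ^ 2 := by field_simp

/-- A nonnegative continuous function whose integrals against squared dilated cut-offs are
bounded has finite integral. -/
theorem lintegral_lt_top_of_integral_sq_cutoff_le {g : E2 → ℝ} (hg : Continuous g)
    (hg0 : ∀ x, 0 ≤ g x) (χ : ContDiffBump (0 : E2)) (hχ : χ.rIn = 1) {C : ℝ}
    (hC : ∀ R : ℝ, 0 < R → ∫ x, χ (R⁻¹ • x) ^ 2 * g x ≤ C) :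
    ∫⁻ x, ENNReal.ofReal (g x) < ⊤ := by
  have hlim := (aecover_ball (μ := (volume : Measure E2)) (x := 0)
    (r := fun R : ℝ => R) Filter.tendsto_id).lintegral_tendsto_of_countably_generated
    (f := fun x => ENNReal.ofReal (g x)) hg.measurable.ennreal_ofReal.aemeasurable
  refine (le_of_tendsto hlim (b := ENNReal.ofReal C) ?_).trans_lt ENNReal.ofReal_lt_top
  filter_upwards [Filter.eventually_gt_atTop 0] with R hR
  have hcs : HasCompactSupport fun x : E2 => χ (R⁻¹ • x) :=
    χ.hasCompactSupport.comp_smul (inv_ne_zero hR.ne')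
  have hint : Integrable fun x => χ (R⁻¹ • x) ^ 2 * g x := by
    have hc : Continuous fun x : E2 => χ (R⁻¹ • x) := χ.continuous.comp (by fun_prop)
    simp_rw [sq]
    exact ((hc.mul hc).mul hg).integrable_of_hasCompactSupport
      (HasCompactSupport.mul_right hcs.mul_left)
  calc ∫⁻ x in ball 0 R, ENNReal.ofReal (g x)
      = ∫⁻ x in ball 0 R, ENNReal.ofReal (χ (R⁻¹ • x) ^ 2 * g x) := by
        refine setLIntegral_congr_fun measurableSet_ball fun x hx => ?_
        have hx' : R⁻¹ • x ∈ closedBall (0 : E2) χ.rIn := by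
          rw [mem_ball_zero_iff] at hx
          rw [mem_closedBall_zero_iff, norm_smul, hχ, Real.norm_of_nonneg (by positivity),
            inv_mul_le_iff₀ hR]
          linarith
        simp [χ.one_of_mem_closedBall hx']
    _ ≤ ∫⁻ x, ENNReal.ofReal (χ (R⁻¹ • x) ^ 2 * g x) := setLIntegral_le_lintegral _ _
    _ = ENNReal.ofReal (∫ x, χ (R⁻¹ • x) ^ 2 * g x) :=
        (ofReal_integral_eq_lintegral_ofReal hint (Filter.Eventually.of_forall fun x =>
          mul_nonneg (sq_nonneg _) (hg0 x))).symm
    _ ≤ ENNReal.ofReal C := ENNReal.ofReal_le_ofReal (hC R hR)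

theorem statement12 (f u : E2 → ℝ)
    (hf : ContDiff ℝ 2 f)
    (hpos : ∀ p q : E2, q ≠ 0 → 0 < Hess f p q)
    (Lam : ℝ) (hLam : 0 < Lam)
    (hgrow : ∀ p : E2, ‖iteratedFDeriv ℝ 2 f p‖ ≤ Lam / (1 + ‖p‖))
    (hu : ContDiff ℝ 2 u) (heq : solves f u)
    (K : ℝ) (hK : 0 < K)
    (hbd : ∀ x : E2, |pd u 0 x| * (Real.log (1 + |pd u 0 x|)) ^ 2 ≤ K * (|pd u 1 x| + 1)) :
    ∫⁻ x : E2, ENNReal.ofReal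
      (Hess f (gradient u x) (gradient (pd u 0) x) * (1 + (pd u 0 x) ^ 2) ^ (-(1:ℝ)/2)) < ⊤ := by
  have hnonneg : ∀ p q, 0 ≤ Hess f p q := fun p q => by
    rcases eq_or_ne q 0 with rfl | hq
    · simp [Hess_eq_fderiv_fderiv]
    · exact (hpos p q hq).le
  have hrpow : ∀ t : ℝ, (1 + t ^ 2) ^ (-(1:ℝ)/2) = (√(1 + t ^ 2))⁻¹ := fun t => by
    rw [neg_div, Real.rpow_neg (by positivity), Real.sqrt_eq_rpow]
  have hv := contDiff_pd hu 0
  have hvc := hv.continuous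
  let χ : ContDiffBump (0 : E2) := ⟨1, 2, one_pos, one_lt_two⟩
  simp_rw [hrpow]
  refine lintegral_lt_top_of_integral_sq_cutoff_le ?_ (fun x => mul_nonneg (hnonneg _ _)
    (by positivity)) χ rfl (C := 4 * (Lam * (8 * K + 4) * ∫ x, ‖gradient χ x‖ ^ 2)) fun R hR => ?_
  · refine (continuous_Hess_comp hf (hu.gradient_right (m := 1) (by norm_num)).continuous
      (hv.gradient_right (m := 0) (by norm_num)).continuous).mul
      (Continuous.inv₀ (by fun_prop) fun x => ?_)
    positivity
  · rw [← integral_norm_gradient_comp_inv_smul_sq χ hR]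
    exact integral_sq_mul_Hess_le_dirichlet hf hnonneg hLam.le hgrow hu heq hK.le hbd
      (χ.contDiff.comp (contDiff_const_smul _))
      (χ.hasCompactSupport.comp_smul (inv_ne_zero hR.ne'))
end
end

section
/- Let f : ℝ² → ℝ be of class C² satisfying (i) D²f(p)(q,q) > 0 for all p, q ∈ ℝ² with q ≠ 0, and (ii) there is a constant Λ > 0 with |D²f(p)| ≤ Λ/(1+|p|) for all p ∈ ℝ². Let u ∈ C²(ℝ²) solve div[Df(∇u)] = 0 on ℝ², and suppose there is K > 0 with |∂₁u(x)| · ln²(1+|∂₁u(x)|) ≤ K(|∂₂u(x)| + 1) for all x ∈ ℝ². Then ∇∂₁u ≡ 0 on ℝ², i.e. ∂₁u is a constant function. -/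
open Real MeasureTheory Metric
open scoped ENNReal

noncomputable section

/-- A divergence-free `C¹` field has directional derivatives that are weakly divergence-free,
already against `C¹` test functions. -/
theorem integral_sum_fderiv_mul_fderiv_eq_zero_s13 {F : Fin 2 → E2 → ℝ}
    (hF : ∀ i, ContDiff ℝ 1 (F i)) (hdiv : ∀ x, ∑ i, fderiv ℝ (F i) x (ee i) = 0)
    {ψ : E2 → ℝ} (hψ : ContDiff ℝ 1 ψ) (hc : HasCompactSupport ψ) (v : E2) :
    ∫ x, ∑ i, fderiv ℝ (F i) x v * fderiv ℝ ψ x (ee i) = 0 := by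
  have hFd : ∀ i, Continuous (fderiv ℝ (F i)) := fun i => (hF i).continuous_fderiv one_ne_zero
  have hFc : ∀ i, Continuous (F i) := fun i => (hF i).continuous
  have hψd : Continuous (fderiv ℝ ψ) := hψ.continuous_fderiv one_ne_zero
  have hcd : ∀ e, HasCompactSupport fun x => fderiv ℝ ψ x e := fun e => hc.fderiv_apply ℝ e
  have hint : ∀ (i : Fin 2) (g : E2 → ℝ), Continuous g →
      Integrable fun x => g x * fderiv ℝ ψ x (ee i) := fun i g hg =>
    (hg.mul (by fun_prop)).integrable_of_hasCompactSupport (hcd (ee i)).mul_left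
  have hzero : ∀ t : ℝ, ∫ x, ∑ i, F i (x + t • v) * fderiv ℝ ψ x (ee i) = 0 := by
    intro t
    rw [integral_finsetSum _ fun i _ => hint i (fun x => F i (x + t • v))
      ((hFc i).comp (by fun_prop))]
    have hparts : ∀ i : Fin 2, ∫ x, F i (x + t • v) * fderiv ℝ ψ x (ee i)
        = -∫ x, fderiv ℝ (F i) (x + t • v) (ee i) * ψ x := by
      intro i
      have hd : ∀ x, fderiv ℝ (fun y => F i (y + t • v)) x = fderiv ℝ (F i) (x + t • v) :=
        fun x => fderiv_comp_add_right (t • v)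
      have hcont : Continuous fun x => F i (x + t • v) := (hFc i).comp (by fun_prop)
      have hcont' : Continuous fun x => fderiv ℝ (F i) (x + t • v) := (hFd i).comp (by fun_prop)
      have h := integral_mul_fderiv_eq_neg_fderiv_mul_of_integrable (μ := volume)
        (f := fun y => F i (y + t • v)) (g := ψ) (v := ee i) ?_ ?_ ?_ ?_ ?_
      · simpa only [hd] using h
      · simp only [hd]
        have hψc := hψ.continuous
        exact Continuous.integrable_of_hasCompactSupport (by fun_prop) hc.mul_left
      · exact hint i _ hcont
      · exact (hcont.mul hψ.continuous).integrable_of_hasCompactSupport hc.mul_left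
      · intro x _
        exact (((hF i).differentiable one_ne_zero).comp
          (differentiable_id.add_const _)).differentiableAt
      · intro x _
        exact (hψ.differentiable one_ne_zero).differentiableAt
    simp only [hparts, Finset.sum_neg_distrib]
    rw [← integral_finsetSum, neg_eq_zero]
    · simp [← Finset.sum_mul, hdiv]
    · intro i _
      have hψc := hψ.continuous
      have hcont' : Continuous fun x => fderiv ℝ (F i) (x + t • v) := (hFd i).comp (by fun_prop)
      exact Continuous.integrable_of_hasCompactSupport (by fun_prop) hc.mul_left
  let G' : ℝ → E2 → ℝ := fun t x => ∑ i, fderiv ℝ (F i) (x + t • v) v * fderiv ℝ ψ x (ee i)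
  have hG' : Continuous fun p : ℝ × E2 => G' p.1 p.2 := by
    refine continuous_finsetSum _ fun i _ => ?_
    have h1 : Continuous fun p : ℝ × E2 => fderiv ℝ (F i) (p.2 + p.1 • v) :=
      (hFd i).comp (by fun_prop)
    have h2 : Continuous fun p : ℝ × E2 => fderiv ℝ ψ p.2 := hψd.comp continuous_snd
    fun_prop
  obtain ⟨M, hM⟩ := ((isCompact_Icc (a := (-1 : ℝ)) (b := 1)).prod
    hc.isCompact).exists_bound_of_continuousOn hG'.continuousOn
  have hoff : ∀ x ∉ tsupport ψ, fderiv ℝ ψ x = 0 := fun x hx => by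
    by_contra h
    exact hx (support_fderiv_subset ℝ h)
  have key := hasDerivAt_integral_of_dominated_loc_of_deriv_le (μ := (volume : Measure E2))
    (F := fun (t : ℝ) x => ∑ i, F i (x + t • v) * fderiv ℝ ψ x (ee i)) (F' := G') (x₀ := (0 : ℝ))
    (s := Set.Icc (-1) 1) (bound := (tsupport ψ).indicator fun _ => M)
    (Icc_mem_nhds (by norm_num) (by norm_num)) ?_ ?_ ?_ ?_ ?_ ?_
  · have h := key.2
    simp only [hzero] at h
    have h0 := h.unique (hasDerivAt_const (0 : ℝ) (0 : ℝ))
    simpa [G'] using h0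
  · refine Filter.Eventually.of_forall fun t => Continuous.aestronglyMeasurable ?_
    refine continuous_finsetSum _ fun i _ => ?_
    have h1 : Continuous fun x : E2 => F i (x + t • v) := (hFc i).comp (by fun_prop)
    fun_prop
  · exact integrable_finsetSum _ fun i _ => hint i (fun x => F i (x + (0 : ℝ) • v))
      ((hFc i).comp (by fun_prop))
  · exact (hG'.comp (Continuous.prodMk_right (0 : ℝ))).aestronglyMeasurable
  · refine Filter.Eventually.of_forall fun x t ht => ?_
    by_cases hx : x ∈ tsupport ψ
    · rw [Set.indicator_of_mem hx]
      exact hM (t, x) ⟨ht, hx⟩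
    · rw [Set.indicator_of_notMem hx]
      simp [G', hoff x hx]
  · exact (integrable_indicator_iff hc.isCompact.measurableSet).2
      (integrableOn_const hc.isCompact.measure_lt_top.ne)
  · refine Filter.Eventually.of_forall fun x t _ => HasDerivAt.fun_sum fun i _ => ?_
    have h1 : HasDerivAt (fun t : ℝ => x + t • v) v t := by
      simpa using ((hasDerivAt_id t).smul_const v).const_add x
    exact (((hF i).differentiable one_ne_zero _).hasFDerivAt.comp_hasDerivAt t h1).mul_const _

/-- Cutoff functions between `ball 0 R` and `ball 0 (3 * R)` with gradient of order `1 / R`. -/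
theorem exists_cutoff : ∃ M : ℝ, ∀ R : ℝ, 0 < R → ∃ η : E2 → ℝ, ContDiff ℝ 1 η ∧
    HasCompactSupport η ∧ (∀ x, 0 ≤ η x) ∧ (∀ x, η x ≤ 1) ∧ (∀ x ∈ ball 0 R, η x = 1) ∧
    (∀ x ∉ ball (0 : E2) (3 * R) \ ball 0 R, fderiv ℝ η x = 0) ∧
    ∀ x, ‖fderiv ℝ η x‖ ≤ M / R := by
  let χ : ContDiffBump (0 : E2) := ⟨1, 2, one_pos, one_lt_two⟩
  have hχ : ContDiff ℝ 1 χ := χ.contDiff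
  obtain ⟨M, hM⟩ := (χ.hasCompactSupport.fderiv ℝ).exists_bound_of_continuous
    (hχ.continuous_fderiv one_ne_zero)
  refine ⟨M, fun R hR => ⟨fun x => χ (R⁻¹ • x), hχ.comp (by fun_prop),
    χ.hasCompactSupport.comp_smul (inv_ne_zero hR.ne'), fun x => χ.nonneg, fun x => χ.le_one,
    fun x hx => χ.one_of_mem_closedBall ?_, fun x hx => ?_, fun x => ?_⟩⟩
  · rw [mem_ball_zero_iff] at hx
    rw [mem_closedBall_zero_iff, norm_smul, norm_inv, Real.norm_of_nonneg hR.le,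
      inv_mul_le_iff₀ hR]
    simpa [χ] using hx.le
  · rw [Set.mem_sdiff, not_and_or, not_not] at hx
    rcases hx with hx | hx
    · have hx' : 3 * R ≤ ‖x‖ := by simpa using hx
      refine Filter.EventuallyEq.fderiv_eq (f := fun _ => (0 : ℝ)) ?_ |>.trans (by simp)
      have ho : IsOpen {y : E2 | 2 * R < ‖y‖} := isOpen_lt continuous_const continuous_norm
      filter_upwards [ho.mem_nhds (show 2 * R < ‖x‖ by linarith)] with y hy
      refine χ.zero_of_le_dist ?_
      rw [dist_zero_right, norm_smul, norm_inv, Real.norm_of_nonneg hR.le, le_inv_mul_iff₀ hR]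
      have : 2 * R < ‖y‖ := hy
      simp only [χ]; linarith
    · refine Filter.EventuallyEq.fderiv_eq (f := fun _ => (1 : ℝ)) ?_ |>.trans (by simp)
      filter_upwards [isOpen_ball.mem_nhds hx] with y hy
      refine χ.one_of_mem_closedBall ?_
      rw [mem_ball_zero_iff] at hy
      rw [mem_closedBall_zero_iff, norm_smul, norm_inv, Real.norm_of_nonneg hR.le,
        inv_mul_le_iff₀ hR]
      simpa [χ] using hy.le
  · have h : fderiv ℝ (fun x => χ (R⁻¹ • x)) x = R⁻¹ • fderiv ℝ χ (R⁻¹ • x) :=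
      fderiv_comp_smul (f := (χ : E2 → ℝ)) R⁻¹
    rw [h, norm_smul, norm_inv, Real.norm_of_nonneg hR.le, div_eq_inv_mul]
    gcongr
    exact hM _

theorem le_mul_add_div_of_sq_le {r s c ε : ℝ} (hε : 0 < ε) (hs : 0 ≤ s) (hc : 0 ≤ c)
    (h : r ^ 2 ≤ s * c) : r ≤ ε * s + c / ε := by
  refine abs_le_of_sq_le_sq' ?_ (by positivity) |>.2
  have h1 : (ε * s + c / ε) ^ 2 = (ε * s) ^ 2 + 2 * (s * c) + (c / ε) ^ 2 := by
    field_simp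
    ring
  nlinarith [sq_nonneg (ε * s), sq_nonneg (c / ε), mul_nonneg hs hc]

theorem caccioppoli_annulus {q : E2 → ℝ} (hq : Continuous q) (hq0 : ∀ x, 0 ≤ q x) {C : ℝ}
    (hC : 0 ≤ C)
    (H : ∀ η : E2 → ℝ, ContDiff ℝ 1 η → HasCompactSupport η → ∃ r : E2 → ℝ, Continuous r ∧
      ∫ x, η x ^ 2 * q x = ∫ x, r x ∧
      ∀ x, r x ^ 2 ≤ C * (η x ^ 2 * q x) * ‖fderiv ℝ η x‖ ^ 2) :
    ∃ D : ℝ, ∀ R > 0, ∃ I : ℝ, ∫ x in ball 0 R, q x ≤ I ∧ ∀ ε > 0, I ≤ ε * I + D / ε ∧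
      I ≤ ε * ((∫ x in ball 0 (3 * R), q x) - ∫ x in ball 0 R, q x) + D / ε := by
  obtain ⟨M, hM⟩ := exists_cutoff
  refine ⟨9 * C * M ^ 2 * volume.real (ball (0 : E2) 1), fun R hR => ?_⟩
  obtain ⟨η, hη, hηc, hη0, hη1, hηR, hηA, hηM⟩ := hM R hR
  obtain ⟨r, hr, hrI, hrle⟩ := H η hη hηc
  have hηcont := hη.continuous
  set A : Set E2 := ball (0 : E2) (3 * R) \ ball 0 R
  have hint : Integrable fun x => η x ^ 2 * q x := by
    refine Continuous.integrable_of_hasCompactSupport (by fun_prop) ?_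
    exact (hηc.comp_left (g := fun t => t ^ 2) (by simp)).mul_right
  have hpos : ∀ x, 0 ≤ η x ^ 2 * q x := fun x => mul_nonneg (sq_nonneg _) (hq0 x)
  have hle : ∀ x, η x ^ 2 * q x ≤ q x := fun x =>
    mul_le_of_le_one_left (hq0 x) (pow_le_one₀ (hη0 x) (hη1 x))
  have hqball : ∀ ρ, IntegrableOn q (ball 0 ρ) := fun ρ =>
    (hq.continuousOn.integrableOn_compact (isCompact_closedBall 0 ρ)).mono_set
      ball_subset_closedBall
  have hqA : IntegrableOn q A := (hqball (3 * R)).mono_set Set.sdiff_subset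
  have hsub : ball (0 : E2) R ⊆ ball 0 (3 * R) := ball_subset_ball (by linarith)
  have hAvol : volume.real A ≤ 9 * R ^ 2 * volume.real (ball (0 : E2) 1) := by
    calc volume.real A ≤ volume.real (ball (0 : E2) (3 * R)) :=
          measureReal_mono Set.sdiff_subset measure_ball_lt_top.ne
      _ = _ := by
          rw [measureReal_def, Measure.addHaar_ball _ _ (by positivity), ENNReal.toReal_mul,
            ENNReal.toReal_ofReal (by positivity), measureReal_def]
          rw [finrank_euclideanSpace_fin]
          ring
  have hAfin : volume A ≠ ⊤ :=
    ((measure_mono Set.sdiff_subset).trans_lt (measure_ball_lt_top (x := (0 : E2)))).ne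
  refine ⟨∫ x, η x ^ 2 * q x, ?_, fun ε hε => ?_⟩
  · calc ∫ x in ball 0 R, q x = ∫ x in ball 0 R, η x ^ 2 * q x :=
          setIntegral_congr_fun measurableSet_ball fun x hx => by simp [hηR x hx]
      _ ≤ _ := setIntegral_le_integral hint (Filter.Eventually.of_forall hpos)
  have hmain : ∫ x, η x ^ 2 * q x ≤ ε * (∫ x in A, η x ^ 2 * q x) +
      9 * C * M ^ 2 * volume.real (ball (0 : E2) 1) / ε := by
    have hrA : ∫ x in A, r x = ∫ x, r x := setIntegral_eq_integral_of_forall_compl_eq_zero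
      fun x hx => by
        have h := hrle x
        rw [hηA x hx] at h
        have h' : r x ^ 2 ≤ 0 := by simpa using h
        exact pow_eq_zero_iff two_ne_zero |>.1 (le_antisymm h' (sq_nonneg _))
    rw [hrI, ← hrA]
    have hconst : IntegrableOn (fun _ : E2 => C * (M / R) ^ 2 / ε) A := integrableOn_const hAfin
    calc ∫ x in A, r x ≤ ∫ x in A, (ε * (η x ^ 2 * q x) + C * (M / R) ^ 2 / ε) := by
          refine setIntegral_mono ?_ ((hint.integrableOn.const_mul ε).add hconst) fun x => ?_
          · exact ((hr.continuousOn.integrableOn_compact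
              (isCompact_closedBall 0 (3 * R))).mono_set ball_subset_closedBall).mono_set
              Set.sdiff_subset
          · refine le_mul_add_div_of_sq_le hε (hpos x) (by positivity) ((hrle x).trans ?_)
            have h2 : ‖fderiv ℝ η x‖ ^ 2 ≤ (M / R) ^ 2 := by gcongr; exact hηM x
            calc C * (η x ^ 2 * q x) * ‖fderiv ℝ η x‖ ^ 2
                ≤ C * (η x ^ 2 * q x) * (M / R) ^ 2 :=
                  mul_le_mul_of_nonneg_left h2 (mul_nonneg hC (hpos x))
              _ = _ := by ring
      _ = ε * (∫ x in A, η x ^ 2 * q x) + volume.real A * (C * (M / R) ^ 2 / ε) := by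
          rw [integral_add (hint.integrableOn.const_mul ε) hconst, integral_const_mul,
            setIntegral_const, smul_eq_mul]
      _ ≤ ε * (∫ x in A, η x ^ 2 * q x) +
          9 * R ^ 2 * volume.real (ball (0 : E2) 1) * (C * (M / R) ^ 2 / ε) := by gcongr
      _ = _ := by field_simp
  constructor
  · refine hmain.trans ?_
    have h := setIntegral_le_integral (s := A) hint (Filter.Eventually.of_forall hpos)
    gcongr
  · refine hmain.trans ?_
    rw [← setIntegral_sdiff measurableSet_ball (hqball _) hsub]
    have h := setIntegral_mono (s := A) hint.integrableOn hqA hle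
    gcongr

/-- In the plane, a nonnegative density satisfying a Caccioppoli inequality in which only the
gradient of the cutoff function appears on the right-hand side vanishes. -/
theorem eq_zero_of_caccioppoli {q : E2 → ℝ} (hq : Continuous q) (hq0 : ∀ x, 0 ≤ q x) {C : ℝ}
    (hC : 0 ≤ C)
    (H : ∀ η : E2 → ℝ, ContDiff ℝ 1 η → HasCompactSupport η → ∃ r : E2 → ℝ, Continuous r ∧
      ∫ x, η x ^ 2 * q x = ∫ x, r x ∧
      ∀ x, r x ^ 2 ≤ C * (η x ^ 2 * q x) * ‖fderiv ℝ η x‖ ^ 2) (x : E2) :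
    q x = 0 := by
  obtain ⟨D, hD⟩ := caccioppoli_annulus hq hq0 hC H
  have hqball : ∀ ρ, IntegrableOn q (ball 0 ρ) := fun ρ =>
    (hq.continuousOn.integrableOn_compact (isCompact_closedBall 0 ρ)).mono_set
      ball_subset_closedBall
  set a : ℝ → ℝ := fun R => ∫ x in ball 0 R, q x
  have hmono : Monotone a := fun R S hRS => setIntegral_mono_set (hqball S)
    (Filter.Eventually.of_forall hq0) (ball_subset_ball hRS).eventuallyLE
  have hbdd : BddAbove (Set.range a) := by
    refine ⟨4 * D, ?_⟩
    rintro _ ⟨R, rfl⟩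
    obtain ⟨I, hI, hε⟩ := hD (max R 1) (by positivity)
    have h := (hε (1 / 2) (by norm_num)).1
    have h1 : a R ≤ a (max R 1) := hmono (le_max_left _ _)
    have h2 : D / (1 / 2) = 2 * D := by ring
    have h3 : a (max R 1) ≤ I := hI
    linarith
  set S := ⨆ R, a R
  have hlim : Filter.Tendsto a Filter.atTop (nhds S) := tendsto_atTop_ciSup hmono hbdd
  have hS : ∀ ε > 0, S ≤ D / ε := by
    intro ε hε
    have h1 : Filter.Tendsto (fun R => ε * (S - a R) + D / ε) Filter.atTop
        (nhds (ε * (S - S) + D / ε)) := ((hlim.const_sub S).const_mul ε).add_const _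
    rw [sub_self, mul_zero, zero_add] at h1
    refine le_of_tendsto_of_tendsto hlim h1 ?_
    filter_upwards [Filter.eventually_gt_atTop 0] with R hR
    obtain ⟨I, hI, hIε⟩ := hD R hR
    refine hI.trans ((hIε ε hε).2.trans ?_)
    gcongr
    exact le_ciSup hbdd (3 * R)
  have hS0 : S ≤ 0 := ge_of_tendsto (tendsto_const_nhds.div_atTop Filter.tendsto_id)
    (by filter_upwards [Filter.eventually_gt_atTop 0] with ε hε using hS ε hε)
  have hzero : ∫ y in ball 0 (‖x‖ + 1), q y = 0 := le_antisymm ((le_ciSup hbdd _).trans hS0)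
    (integral_nonneg hq0)
  rw [setIntegral_eq_zero_iff_of_nonneg_ae (Filter.Eventually.of_forall hq0) (hqball _)] at hzero
  exact Measure.eqOn_open_of_ae_eq hzero isOpen_ball hq.continuousOn continuousOn_const
    (show x ∈ ball 0 (‖x‖ + 1) by simp)

theorem toDual_symm_eq_sum (L : E2 →L[ℝ] ℝ) :
    (InnerProductSpace.toDual ℝ E2).symm L = ∑ i, L (ee i) • ee i := by
  have h := (EuclideanSpace.basisFun (Fin 2) ℝ).sum_repr' ((InnerProductSpace.toDual ℝ E2).symm L)
  rw [← h]
  refine Finset.sum_congr rfl fun i _ => ?_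
  rw [real_inner_comm, InnerProductSpace.toDual_symm_apply, EuclideanSpace.basisFun_apply]
  rfl

theorem norm_gradient_eq (v : E2 → ℝ) (x : E2) : ‖gradient v x‖ = ‖fderiv ℝ v x‖ :=
  LinearIsometryEquiv.norm_map _ _

theorem contDiff_gradient {v : E2 → ℝ} (hv : ContDiff ℝ 2 v) : ContDiff ℝ 1 (gradient v) :=
  (InnerProductSpace.toDual ℝ E2).symm.contDiff.comp (hv.fderiv_right (by norm_num))

theorem continuous_gradient {v : E2 → ℝ} (hv : ContDiff ℝ 1 v) : Continuous (gradient v) :=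
  (InnerProductSpace.toDual ℝ E2).symm.continuous.comp (hv.continuous_fderiv one_ne_zero)

theorem abs_pd_le (u : E2 → ℝ) (i : Fin 2) (x : E2) : |pd u i x| ≤ ‖gradient u x‖ := by
  rw [norm_gradient_eq]
  simpa [pd, ee] using (fderiv ℝ u x).le_opNorm (ee i)

theorem fderiv_gradient_apply_s13 {u : E2 → ℝ} (hu : ContDiff ℝ 2 u) (i : Fin 2) (x : E2) :
    fderiv ℝ (gradient u) x (ee i) = gradient (pd u i) x := by
  have hd : DifferentiableAt ℝ (fderiv ℝ u) x :=
    (hu.fderiv_right (m := 1) (by norm_num)).differentiable one_ne_zero x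
  have h1 : fderiv ℝ (gradient u) x (ee i) =
      (InnerProductSpace.toDual ℝ E2).symm (fderiv ℝ (fderiv ℝ u) x (ee i)) := by
    have h := (InnerProductSpace.toDual ℝ E2).symm.toContinuousLinearEquiv.hasFDerivAt.comp x
      hd.hasFDerivAt
    exact congrArg (fun L : E2 →L[ℝ] E2 => L (ee i)) h.fderiv
  rw [h1, gradient]
  congr 1
  ext v
  have h2 : fderiv ℝ (pd u i) x v = fderiv ℝ (fderiv ℝ u) x v (ee i) := by
    have h := hd.hasFDerivAt.clm_apply (hasFDerivAt_const (ee i) x)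
    refine (congrArg (fun L : E2 →L[ℝ] ℝ => L v) h.fderiv).trans ?_
    simp
  rw [h2]
  exact hu.contDiffAt.isSymmSndFDerivAt (by simp) _ _

/-- The weak form of the equation solved by `∂ᵢu`, obtained by differentiating the
Euler equation. -/
theorem solves.integral_hessian_gradient_pd_eq_zero {f u : E2 → ℝ} (heq : solves f u)
    (hf : ContDiff ℝ 2 f) (hu : ContDiff ℝ 2 u) (i : Fin 2)
    {ψ : E2 → ℝ} (hψ : ContDiff ℝ 1 ψ) (hc : HasCompactSupport ψ) :
    ∫ x, fderiv ℝ (fderiv ℝ f) (gradient u x) (gradient (pd u i) x) (gradient ψ x) = 0 := by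
  have hf' : ContDiff ℝ 1 (fderiv ℝ f) := hf.fderiv_right (by norm_num)
  have hF : ∀ j, ContDiff ℝ 1 fun y => fderiv ℝ f (gradient u y) (ee j) := fun j =>
    (hf'.comp (contDiff_gradient hu)).clm_apply contDiff_const
  rw [← integral_sum_fderiv_mul_fderiv_eq_zero_s13 hF heq hψ hc (ee i)]
  congr 1
  ext x
  have hψx : gradient ψ x = ∑ j, fderiv ℝ ψ x (ee j) • ee j := toDual_symm_eq_sum _
  rw [hψx, map_sum]
  refine Finset.sum_congr rfl fun j _ => ?_
  have h1 : HasFDerivAt (fun y => fderiv ℝ f (gradient u y))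
      ((fderiv ℝ (fderiv ℝ f) (gradient u x)).comp (fderiv ℝ (gradient u) x)) x :=
    (hf'.differentiable one_ne_zero _).hasFDerivAt.comp x
      ((contDiff_gradient hu).differentiable one_ne_zero x).hasFDerivAt
  have h2 := (h1.clm_apply (hasFDerivAt_const (ee j) x)).fderiv
  rw [h2]
  simp [fderiv_gradient_apply_s13 hu, mul_comm]

theorem inv_deriv_arctan_arsinh_le {t P K : ℝ} (ht : |t| ≤ P)
    (h : |t| * Real.log (1 + |t|) ^ 2 ≤ K * (P + 1)) :
    √(1 + t ^ 2) * (1 + Real.arsinh t ^ 2) ≤ (5 + 8 * K) * (1 + P) := by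
  have hs : √(1 + t ^ 2) ≤ 1 + |t| := by
    refine Real.sqrt_le_iff.2 ⟨by positivity, ?_⟩
    nlinarith [sq_abs t, abs_nonneg t]
  set L := Real.log (1 + |t|) with hL
  have hL0 : 0 ≤ L := Real.log_nonneg (by linarith [abs_nonneg t])
  have hLt : L ≤ |t| := by
    have := Real.log_le_sub_one_of_pos (show 0 < 1 + |t| by positivity)
    linarith
  have ha : Real.arsinh t ^ 2 ≤ 4 * L ^ 2 := by
    have habs : Real.arsinh t ^ 2 = Real.arsinh |t| ^ 2 := by
      rcases abs_choice t with h | h <;> simp [h]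
    have h0 : 0 ≤ Real.arsinh |t| := Real.arsinh_nonneg_iff.2 (abs_nonneg t)
    have h1 : Real.arsinh |t| ≤ 2 * L := by
      have h2 : 2 * L = Real.log ((1 + |t|) ^ 2) := by rw [Real.log_pow]; simp [hL]
      rw [h2, Real.arsinh]
      refine Real.log_le_log ?_ ?_
      · have := abs_nonneg t
        positivity
      · rw [sq_abs]
        nlinarith [abs_nonneg t]
    rw [habs]
    nlinarith
  have hL2 : L ^ 2 ≤ 1 + |t| * L ^ 2 := by
    rcases le_total |t| 1 with h1 | h1
    · nlinarith [abs_nonneg t, sq_nonneg L]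
    · nlinarith [sq_nonneg L]
  calc √(1 + t ^ 2) * (1 + Real.arsinh t ^ 2) ≤ (1 + |t|) * (1 + 4 * L ^ 2) := by gcongr
    _ = 1 + |t| + 4 * L ^ 2 + 4 * (|t| * L ^ 2) := by ring
    _ ≤ (5 + 8 * K) * (1 + P) := by nlinarith [abs_nonneg t]

theorem hasDerivAt_arctan_arsinh (t : ℝ) :
    HasDerivAt (fun s => Real.arctan (Real.arsinh s))
      (√(1 + t ^ 2) * (1 + Real.arsinh t ^ 2))⁻¹ t := by
  have h := (Real.hasDerivAt_arctan (Real.arsinh t)).comp t (Real.hasDerivAt_arsinh t)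
  rw [one_div, mul_comm, ← mul_inv] at h
  exact h

theorem gradient_sq_mul_comp {η w : E2 → ℝ} {φ : ℝ → ℝ} {φ' : ℝ} {x : E2}
    (hη : DifferentiableAt ℝ η x) (hw : DifferentiableAt ℝ w x) (hφ : HasDerivAt φ φ' (w x)) :
    gradient (fun y => η y ^ 2 * φ (w y)) x =
      (η x ^ 2 * φ') • gradient w x + (2 * η x * φ (w x)) • gradient η x := by
  have h := ((hη.hasFDerivAt.pow 2).mul (hφ.comp_hasFDerivAt x hw.hasFDerivAt)).fderiv
  have h' : fderiv ℝ (fun y => η y ^ 2 * φ (w y)) x =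
      (η x ^ 2 * φ') • fderiv ℝ w x + (2 * η x * φ (w x)) • fderiv ℝ η x := by
    refine h.trans ?_
    ext v
    simp
    ring
  simp only [gradient, h', map_add, map_smul]

/-- Cauchy–Schwarz for the positive definite Hessian of `f`. -/
theorem sq_hessian_apply_le {f : E2 → ℝ} (hf : ContDiff ℝ 2 f)
    (hpos : ∀ p q : E2, q ≠ 0 → 0 < Hess f p q) (p g h : E2) :
    fderiv ℝ (fderiv ℝ f) p g h ^ 2 ≤
      fderiv ℝ (fderiv ℝ f) p g g * fderiv ℝ (fderiv ℝ f) p h h := by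
  let B : LinearMap.BilinForm ℝ E2 := (fderiv ℝ (fderiv ℝ f) p).toLinearMap₁₂
  refine LinearMap.BilinForm.apply_sq_le_of_symm B (fun y => ?_) ⟨fun y z => ?_⟩ g h
  · rcases eq_or_ne y 0 with rfl | hy
    · simp
    · have := hpos p y hy
      rw [Hess, iteratedFDeriv_two_apply] at this
      exact this.le
  · exact hf.contDiffAt.isSymmSndFDerivAt (by simp) _ _

theorem statement13 (f u : E2 → ℝ)
    (hf : ContDiff ℝ 2 f)
    (hpos : ∀ p q : E2, q ≠ 0 → 0 < Hess f p q)
    (Lam : ℝ) (hLam : 0 < Lam)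
    (hgrow : ∀ p : E2, ‖iteratedFDeriv ℝ 2 f p‖ ≤ Lam / (1 + ‖p‖))
    (hu : ContDiff ℝ 2 u) (heq : solves f u)
    (K : ℝ) (hK : 0 < K)
    (hbd : ∀ x : E2, |pd u 0 x| * (Real.log (1 + |pd u 0 x|)) ^ 2 ≤ K * (|pd u 1 x| + 1)) :
    ∃ a : ℝ, ∀ x : E2, pd u 0 x = a := by
  set w := pd u 0
  have hw : ContDiff ℝ 1 w := contDiff_pd hu 0
  have hwc := hw.continuous
  let B : E2 → E2 →L[ℝ] E2 →L[ℝ] ℝ := fun x => fderiv ℝ (fderiv ℝ f) (gradient u x)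
  let m : ℝ → ℝ := fun t => √(1 + t ^ 2) * (1 + Real.arsinh t ^ 2)
  let φ : ℝ → ℝ := fun t => Real.arctan (Real.arsinh t)
  have hBc : Continuous B :=
    ((hf.fderiv_right (m := 1) (by norm_num)).continuous_fderiv one_ne_zero).comp
      (contDiff_gradient hu).continuous
  have hgc : Continuous (gradient w) := continuous_gradient hw
  have hBpos : ∀ x y, y ≠ 0 → 0 < B x y y := fun x y hy => by
    have := hpos (gradient u x) y hy
    rwa [Hess, iteratedFDeriv_two_apply] at this
  have hBnonneg : ∀ x y, 0 ≤ B x y y := fun x y => by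
    rcases eq_or_ne y 0 with rfl | hy
    · simp
    · exact (hBpos x y hy).le
  have hBle : ∀ x y, B x y y ≤ Lam / (1 + ‖gradient u x‖) * ‖y‖ ^ 2 := fun x y => by
    have h := (iteratedFDeriv ℝ 2 f (gradient u x)).le_opNorm ![y, y]
    rw [iteratedFDeriv_two_apply] at h
    simp only [Fin.prod_univ_two, Matrix.cons_val_zero, Matrix.cons_val_one] at h
    calc B x y y ≤ ‖B x y y‖ := Real.le_norm_self _
      _ ≤ _ := h
      _ ≤ Lam / (1 + ‖gradient u x‖) * (‖y‖ * ‖y‖) := by gcongr; exact hgrow _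
      _ = _ := by ring
  have hmpos : ∀ t, 0 < m t := fun t => by positivity
  have hmc : Continuous m := by
    have := Real.continuous_arsinh
    fun_prop
  have hφc : ContDiff ℝ 1 φ := Real.contDiff_arctan.comp Real.contDiff_arsinh
  have hφ : ∀ t, HasDerivAt φ (m t)⁻¹ t := hasDerivAt_arctan_arsinh
  have hφsq : ∀ t, φ t ^ 2 ≤ 4 := fun t => by
    have h1 := Real.arctan_lt_pi_div_two (Real.arsinh t)
    have h2 := Real.neg_pi_div_two_lt_arctan (Real.arsinh t)
    have h3 := Real.pi_le_four
    have : φ t = Real.arctan (Real.arsinh t) := rfl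
    nlinarith
  have hm : ∀ x, m (w x) ≤ (5 + 8 * K) * (1 + ‖gradient u x‖) := fun x =>
    inv_deriv_arctan_arsinh_le (abs_pd_le u 0 x)
      ((hbd x).trans (by gcongr; exact abs_pd_le u 1 x))
  have hq := eq_zero_of_caccioppoli
    (q := fun x => (m (w x))⁻¹ * B x (gradient w x) (gradient w x))
    (C := 16 * Lam * (5 + 8 * K)) ?_ ?_ (by positivity) ?_
  · have hfd : ∀ x, fderiv ℝ w x = 0 := fun x => by
      by_contra hne
      have hg : gradient w x ≠ 0 := fun h0 => hne (by
        rw [← norm_eq_zero, ← norm_gradient_eq, h0, norm_zero])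
      exact (mul_pos (inv_pos.2 (hmpos (w x))) (hBpos x _ hg)).ne' (hq x)
    exact ⟨w 0, fun x => is_const_of_fderiv_eq_zero (hw.differentiable one_ne_zero) hfd x 0⟩
  · have h1 : Continuous fun x => (m (w x))⁻¹ :=
      (hmc.comp hwc).inv₀ fun x => (hmpos _).ne'
    fun_prop
  · exact fun x => mul_nonneg (inv_nonneg.2 (hmpos _).le) (hBnonneg _ _)
  · intro η hη hηc
    have hηcont := hη.continuous
    have hηg := continuous_gradient hη
    have hφw : Continuous fun x => φ (w x) := hφc.continuous.comp hwc
    have hrc : Continuous fun x => -(2 * η x * φ (w x) * B x (gradient w x) (gradient η x)) :=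
      (((continuous_const.mul hηcont).mul hφw).mul ((hBc.clm_apply hgc).clm_apply hηg)).neg
    refine ⟨_, hrc, ?_, fun x => ?_⟩
    · have hψ : ContDiff ℝ 1 fun y => η y ^ 2 * φ (w y) := (hη.pow 2).mul (hφc.comp hw)
      have hηc2 : HasCompactSupport fun y => η y ^ 2 :=
        hηc.comp_left (g := fun t => t ^ 2) (by simp)
      have hweak := heq.integral_hessian_gradient_pd_eq_zero hf hu 0 hψ hηc2.mul_right
      have hptw : ∀ x, fderiv ℝ (fderiv ℝ f) (gradient u x) (gradient (pd u 0) x)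
          (gradient (fun y => η y ^ 2 * φ (w y)) x) =
          η x ^ 2 * ((m (w x))⁻¹ * B x (gradient w x) (gradient w x)) -
            -(2 * η x * φ (w x) * B x (gradient w x) (gradient η x)) := fun x => by
        rw [gradient_sq_mul_comp (hη.differentiable one_ne_zero x)
          (hw.differentiable one_ne_zero x) (hφ (w x))]
        simp only [map_add, map_smul, smul_eq_mul, B]
        ring
      simp only [hptw] at hweak
      rw [integral_sub, sub_eq_zero] at hweak
      · exact hweak
      · refine Continuous.integrable_of_hasCompactSupport ?_ hηc2.mul_right
        have h1 : Continuous fun x => (m (w x))⁻¹ :=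
          (hmc.comp hwc).inv₀ fun x => (hmpos _).ne'
        fun_prop
      · refine Continuous.integrable_of_hasCompactSupport hrc ?_
        exact (hηc.mul_left (f := fun _ => (2 : ℝ))).mul_right.mul_right.neg
    · have hP : 0 < 1 + ‖gradient u x‖ := by positivity
      have hcs := sq_hessian_apply_le hf hpos (gradient u x) (gradient w x) (gradient η x)
      have hBh : B x (gradient η x) (gradient η x) ≤
          Lam * (5 + 8 * K) * (m (w x))⁻¹ * ‖fderiv ℝ η x‖ ^ 2 := by
        refine (hBle x _).trans ?_
        rw [norm_gradient_eq η]
        refine mul_le_mul_of_nonneg_right ?_ (sq_nonneg _)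
        rw [mul_assoc, div_eq_mul_inv]
        refine mul_le_mul_of_nonneg_left ?_ hLam.le
        rw [← div_eq_mul_inv, inv_eq_one_div, div_le_div_iff₀ hP (hmpos _), one_mul]
        exact hm x
      have hg0 := hBnonneg x (gradient w x)
      have hh0 := hBnonneg x (gradient η x)
      calc (-(2 * η x * φ (w x) * B x (gradient w x) (gradient η x))) ^ 2
          = 4 * η x ^ 2 * φ (w x) ^ 2 * B x (gradient w x) (gradient η x) ^ 2 := by ring
        _ ≤ 4 * η x ^ 2 * 4 * (B x (gradient w x) (gradient w x) *
            (Lam * (5 + 8 * K) * (m (w x))⁻¹ * ‖fderiv ℝ η x‖ ^ 2)) := by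
          gcongr
          · exact hφsq _
          · exact hcs.trans (mul_le_mul_of_nonneg_left hBh hg0)
        _ = _ := by ring
end
end
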